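/- arXiv:1809.09676 — 2 statements merged into one kernel-verified Lean document; each statement's English description precedes it below -/
import Mathlib

section
/- If a < b are coprime and B is the balanced number of chips (the smallest n such that the right part of the final state φ(n)^R is a settlement ξ_k with k > Te_{c−1}+1), then for all n ≥ B, with f_0, f_1 the total origin and vertex-1 firing counts to reach φ(n) and f_0', f_1' those for φ(n+1): f_0' − f_1' = f_0 − f_1 = c = ⌈a/(b−a)⌉. -/
/-- Firing at vertex `i` in the `a`-`b` chip-firing game on `ℤ`:
requires at least `a+b` chips at `i`, sends `a` chips to `i-1` and `b` chips to `i+1`. -/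
def fireAt (a b : ℕ) (i : ℤ) (σ σ' : ℤ →₀ ℕ) : Prop :=
  a + b ≤ σ i ∧
  σ' (i - 1) = σ (i - 1) + a ∧
  σ' i = σ i - (a + b) ∧
  σ' (i + 1) = σ (i + 1) + b ∧
  ∀ m : ℤ, m ≠ i - 1 → m ≠ i → m ≠ i + 1 → σ' m = σ m

/-- Reachability by a finite sequence of firings. -/
def Reaches (a b : ℕ) : (ℤ →₀ ℕ) → (ℤ →₀ ℕ) → Prop :=
  Relation.ReflTransGen (fun σ σ' => ∃ i, fireAt a b i σ σ')

/-- Initial state: `n` chips at the origin. -/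
noncomputable def initState (n : ℕ) : ℤ →₀ ℕ := Finsupp.single 0 n

/-- `Leads a b σ L σ'`: the list `L` of vertices, fired in order (each legal),
leads from state `σ` to state `σ'`. -/
inductive Leads (a b : ℕ) : (ℤ →₀ ℕ) → List ℤ → (ℤ →₀ ℕ) → Prop
  | nil (σ : ℤ →₀ ℕ) : Leads a b σ [] σ
  | cons {σ τ σ' : ℤ →₀ ℕ} {i : ℤ} {L : List ℤ} :
      fireAt a b i σ τ → Leads a b τ L σ' → Leads a b σ (i :: L) σ'

/-- The state polynomial `S_σ(t) = Σ_m s_m t^{-m}` evaluated at `t`. -/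
noncomputable def statePoly (σ : ℤ →₀ ℕ) (t : ℚ) : ℚ :=
  ∑ m ∈ σ.support, (σ m : ℚ) * t ^ (-m)

/-- The left part `S_{σ^L}(t) = Σ_{m ≤ 0} s_m t^{-m}`. -/
noncomputable def statePolyL (σ : ℤ →₀ ℕ) (t : ℚ) : ℚ :=
  ∑ m ∈ σ.support.filter (fun m => m ≤ 0), (σ m : ℚ) * t ^ (-m)

/-- The right part `S_{σ^R}(t) = Σ_{m ≥ 1} s_m t^{-m}`. -/
noncomputable def statePolyR (σ : ℤ →₀ ℕ) (t : ℚ) : ℚ :=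
  ∑ m ∈ σ.support.filter (fun m => 1 ≤ m), (σ m : ℚ) * t ^ (-m)

/-- `M_σ = Σ_m m·s_m`. -/
def Mval (σ : ℤ →₀ ℕ) : ℤ := ∑ m ∈ σ.support, m * (σ m : ℤ)

/-- A final (stable) state of the game started with `n` chips at the origin. -/
def IsFinalState (a b n : ℕ) (σ : ℤ →₀ ℕ) : Prop :=
  Reaches a b (initState n) σ ∧ ∀ i : ℤ, σ i < a + b

/-- Firing at vertex `i ≥ 1` on the right part: chips sent to vertex `0` are discarded. -/
def rfireAt (a b : ℕ) (i : ℤ) (σ σ' : ℤ →₀ ℕ) : Prop :=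
  1 ≤ i ∧ a + b ≤ σ i ∧
  (∀ m : ℤ, m ≤ 0 → σ' m = 0) ∧
  σ' i = σ i - (a + b) ∧
  σ' (i + 1) = σ (i + 1) + b ∧
  (1 ≤ i - 1 → σ' (i - 1) = σ (i - 1) + a) ∧
  ∀ m : ℤ, 1 ≤ m → m ≠ i - 1 → m ≠ i → m ≠ i + 1 → σ' m = σ m

/-- `Settles a b σ τ`: `τ` is a stable configuration obtained from `σ`
by firings among the vertices `≥ 1`. -/
def Settles (a b : ℕ) (σ τ : ℤ →₀ ℕ) : Prop :=
  Relation.ReflTransGen (fun x y => ∃ i, rfireAt a b i x y) σ τ ∧ ∀ i : ℤ, τ i < a + b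

/-- The settlement sequence: `ξ 0` is empty and `ξ (k+1)` is obtained from `ξ k`
by adding `b` chips at vertex `1` and stabilizing within the vertices `≥ 1`. -/
def SettlementSeq (a b : ℕ) (ξ : ℕ → ℤ →₀ ℕ) : Prop :=
  ξ 0 = 0 ∧ ∀ k : ℕ, Settles a b (ξ k + Finsupp.single 1 b) (ξ (k + 1))

/-- `RLeads a b σ L σ'`: the list `L` of vertices fired in order (right-part firings)
leads from `σ` to `σ'`. -/
inductive RLeads (a b : ℕ) : (ℤ →₀ ℕ) → List ℤ → (ℤ →₀ ℕ) → Prop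
  | nil (σ : ℤ →₀ ℕ) : RLeads a b σ [] σ
  | cons {σ τ σ' : ℤ →₀ ℕ} {i : ℤ} {L : List ℤ} :
      rfireAt a b i σ τ → RLeads a b τ L σ' → RLeads a b σ (i :: L) σ'

/-- The `m`-th tetrahedral number. -/
def Te (m : ℕ) : ℕ := m * (m + 1) * (m + 2) / 6


/-- The state obtained from `s` when each vertex `i` has fired `u i` times. -/
def lapState (a b : ℤ) (s u : ℤ → ℤ) (i : ℤ) : ℤ :=
  s i - (a + b) * u i + b * u (i - 1) + a * u (i + 1)

lemma fireAt_eq {a b : ℕ} {i : ℤ} {σ τ : ℤ →₀ ℕ} (h : fireAt a b i σ τ) (m : ℤ) :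
    (τ m : ℤ) = σ m - (a + b) * (if m = i then 1 else 0) + b * (if m - 1 = i then 1 else 0)
      + a * (if m + 1 = i then 1 else 0) := by
  obtain ⟨h0, h1, h2, h3, h4⟩ := h
  by_cases e1 : m = i - 1
  · subst e1
    rw [h1, if_neg (by omega), if_neg (by omega), if_pos (by omega)]; push_cast; ring
  by_cases e2 : m = i
  · subst e2
    rw [h2, if_pos (by omega), if_neg (by omega), if_neg (by omega)]
    push_cast [h0]; ring
  by_cases e3 : m = i + 1
  · subst e3
    rw [h3, if_neg (by omega), if_pos (by omega), if_neg (by omega)]; push_cast; ring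
  rw [h4 m e1 e2 e3, if_neg (by omega), if_neg (by omega), if_neg (by omega)]; ring

lemma count_cons_int (L : List ℤ) (i m : ℤ) :
    ((i :: L).count m : ℤ) = L.count m + (if m = i then 1 else 0) := by
  rw [List.count_cons]
  by_cases h : m = i
  · subst h; simp
  · have : ¬ i = m := fun e => h e.symm
    simp [h, this]

lemma Leads.state {a b : ℕ} {σ σ' : ℤ →₀ ℕ} {L : List ℤ} (h : Leads a b σ L σ') (m : ℤ) :
    (σ' m : ℤ) = lapState a b (fun i => σ i) (fun i => L.count i) m := by
  induction h with
  | nil σ => simp [lapState]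
  | cons hf _ ih =>
    rw [ih]
    unfold lapState
    simp only [count_cons_int]
    rw [fireAt_eq hf m]
    ring

/-- Least action principle. -/
lemma Leads.least {a b : ℕ} {σ σ' : ℤ →₀ ℕ} {L : List ℤ} (h : Leads a b σ L σ') :
    ∀ u : ℤ → ℤ, (∀ i, 0 ≤ u i) →
      (∀ i, lapState a b (fun i => σ i) u i < a + b) → ∀ i, (L.count i : ℤ) ≤ u i := by
  induction h with
  | nil σ => intro u hu _ i; simpa using hu i
  | @cons σ τ σ' i L hf _ ih =>
    intro u hu hs m
    have hi : 1 ≤ u i := by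
      by_contra hcon
      have h0 : u i = 0 := by have := hu i; omega
      have h1 := hs i
      have h2 : ((a : ℤ) + b) ≤ σ i := by exact_mod_cast hf.1
      have h3 := mul_nonneg (Int.natCast_nonneg b) (hu (i - 1))
      have h4 := mul_nonneg (Int.natCast_nonneg a) (hu (i + 1))
      simp only [lapState, h0] at h1
      linarith
    have := ih (fun m => u m - (if m = i then 1 else 0)) (by
      intro m
      by_cases h : m = i
      · subst h; simp; omega
      · simpa [h] using hu m) (by
      intro m
      have h1 := hs m
      unfold lapState at h1 ⊢
      simp only []
      rw [fireAt_eq hf m]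
      linarith) m
    rw [count_cons_int]
    linarith

lemma Reaches.leads {a b : ℕ} {σ σ' : ℤ →₀ ℕ} (h : Reaches a b σ σ') :
    ∃ L, Leads a b σ L σ' := by
  unfold Reaches at h
  induction h using Relation.ReflTransGen.head_induction_on with
  | refl => exact ⟨[], Leads.nil _⟩
  | head h1 _ ih =>
    obtain ⟨i, hi⟩ := h1
    obtain ⟨L, hL⟩ := ih
    exact ⟨i :: L, Leads.cons hi hL⟩

/-- `u` is a firing vector with `k` firings at the origin producing the right part `s`. -/
def RightOdo (a b : ℕ) (k : ℤ) (s : ℤ →₀ ℕ) (u : ℤ → ℤ) : Prop :=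
  u 0 = k ∧ (∃ N : ℤ, ∀ m, N ≤ m → u m = 0) ∧
    ∀ m : ℤ, 1 ≤ m → (s m : ℤ) = b * (u (m - 1) - u m) - a * (u m - u (m + 1))

lemma RightOdo.fire {a b : ℕ} {k : ℤ} {s t : ℤ →₀ ℕ} {u : ℤ → ℤ} (h : RightOdo a b k s u)
    {i : ℤ} (hf : rfireAt a b i s t) :
    RightOdo a b k t (fun m => u m + (if m = i then 1 else 0)) := by
  obtain ⟨h0, ⟨N, hN⟩, h2⟩ := h
  obtain ⟨g0, g1, _, g2, g3, g4, g5⟩ := hf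
  refine ⟨?_, ⟨max N (i + 1), ?_⟩, ?_⟩
  · simp only []; rw [if_neg (by omega), h0]; ring
  · intro m hm
    simp only []; rw [if_neg (by omega), hN m (by omega)]; ring
  · intro m hm
    simp only []
    have hs := h2 m hm
    by_cases e1 : m = i - 1
    · subst e1
      rw [g4 hm, if_neg (by omega), if_neg (by omega), if_pos (by omega)]; push_cast
      rw [hs]; ring
    by_cases e2 : m = i
    · subst e2
      rw [g2, if_pos rfl, if_neg (by omega), if_neg (by omega)]
      push_cast [g1]; rw [hs]; ring
    by_cases e3 : m = i + 1
    · subst e3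
      rw [g3, if_pos (by omega), if_neg (by omega), if_neg (by omega)]; push_cast
      rw [hs]; ring
    rw [g5 m hm e1 e2 e3, if_neg (by omega), if_neg (by omega), if_neg (by omega), hs]; ring

lemma SettlementSeq.odo {a b : ℕ} {ξ : ℕ → ℤ →₀ ℕ} (h : SettlementSeq a b ξ) (k : ℕ) :
    ∃ u, RightOdo a b k (ξ k) u := by
  induction k with
  | zero =>
    refine ⟨fun _ => 0, by simp, ⟨0, by simp⟩, ?_⟩
    intro m _; simp [h.1]
  | succ k ih =>
    obtain ⟨u, h0, ⟨N, hN⟩, h2⟩ := ih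
    have base : ∃ v, RightOdo a b (k + 1 : ℕ) (ξ k + Finsupp.single 1 b) v := by
      refine ⟨fun m => u m + (if m = 0 then 1 else 0), ?_, ⟨max N 1, ?_⟩, ?_⟩
      · simp [h0]
      · intro m hm
        simp only []; rw [if_neg (by omega), hN m (by omega)]; ring
      · intro m hm
        have hs := h2 m hm
        simp only [Finsupp.add_apply]
        by_cases e : m = 1
        · subst e
          simp at hs ⊢
          rw [hs]; ring
        · rw [Finsupp.single_eq_of_ne e, if_neg (by omega), if_neg (by omega), if_neg (by omega)]
          push_cast; rw [hs]; ring
    have hr := (h.2 k).1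
    generalize ξ (k + 1) = t at hr ⊢
    induction hr with
    | refl => exact base
    | tail _ hf ih =>
      obtain ⟨i, hi⟩ := hf
      obtain ⟨v, hv⟩ := ih
      exact ⟨_, hv.fire hi⟩

/-- Downward induction on the integers `≥ 0`. -/
lemma down_ind {P : ℤ → Prop} {N : ℤ} (hN : ∀ m, N ≤ m → P m)
    (hs : ∀ m, 0 ≤ m → P (m + 1) → P m) (m : ℤ) (hm : 0 ≤ m) : P m := by
  have key : ∀ j : ℕ, ∀ m : ℤ, 0 ≤ m → N ≤ m + j → P m := by
    intro j
    induction j with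
    | zero => intro m _ h; exact hN m (by simpa using h)
    | succ j ih =>
      intro m hm h
      exact hs m hm (ih (m + 1) (by omega) (by push_cast at h; omega))
  exact key (N - m).toNat m hm (by omega)

lemma RightOdo.unique {a b : ℕ} (hb : 0 < b) {k l : ℤ} {s t : ℤ →₀ ℕ} {u v : ℤ → ℤ}
    (hu : RightOdo a b k s u) (hv : RightOdo a b l t v) (hst : ∀ m : ℤ, 1 ≤ m → s m = t m) :
    k = l := by
  obtain ⟨u0, ⟨N, hN⟩, u2⟩ := hu
  obtain ⟨v0, ⟨M, hM⟩, v2⟩ := hv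
  have := down_ind (P := fun m => u m = v m ∧ u (m + 1) = v (m + 1)) (N := max N M)
    (fun m hm => by
      rw [hN m (by omega), hM m (by omega), hN (m + 1) (by omega), hM (m + 1) (by omega)]
      simp)
    (fun m hm ⟨h1, h2⟩ => by
      refine ⟨?_, h1⟩
      have e1 := u2 (m + 1) (by omega)
      have e2 := v2 (m + 1) (by omega)
      rw [hst (m + 1) (by omega), e2, h1, h2] at e1
      simp only [add_sub_cancel_right] at e1
      have hb' : (b : ℤ) ≠ 0 := by exact_mod_cast hb.ne'
      apply mul_left_cancel₀ hb'
      linarith) 0 le_rfl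
  rw [← u0, ← v0, this.1]

lemma RightOdo.upper {a b : ℕ} {k : ℤ} {s : ℤ →₀ ℕ} {u : ℤ → ℤ}
    (hu : RightOdo a b k s u) (hst : ∀ m, s m < a + b) (c : ℕ)
    (hc : (a : ℤ) ≤ c * (b - a)) : u 0 - u 1 ≤ c := by
  obtain ⟨u0, ⟨N, hN⟩, u2⟩ := hu
  have := down_ind (P := fun m => u m - u (m + 1) ≤ c) (N := N)
    (fun m hm => by
      rw [hN m (by omega), hN (m + 1) (by omega)]
      simp)
    (fun m hm h1 => by
      have e1 := u2 (m + 1) (by omega)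
      have e2 : (s (m + 1) : ℤ) < a + b := by exact_mod_cast hst (m + 1)
      rw [e1] at e2
      simp only [add_sub_cancel_right] at e2
      by_contra hcon
      have h3 : (b : ℤ) * (c + 1) ≤ b * (u m - u (m + 1)) :=
        mul_le_mul_of_nonneg_left (by omega) (by positivity)
      have h4 : (a : ℤ) * (u (m + 1) - u (m + 1 + 1)) ≤ a * c :=
        mul_le_mul_of_nonneg_left h1 (by positivity)
      nlinarith) 0 le_rfl
  simpa using this

/-- Triangular numbers. -/
def tri : ℕ → ℕ
  | 0 => 0
  | n + 1 => tri n + (n + 1)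

lemma two_tri (n : ℕ) : 2 * tri n = n * (n + 1) := by
  induction n with
  | zero => rfl
  | succ n ih => rw [tri, mul_add, ih]; ring

lemma tri_le_Te (c : ℕ) (hc : 1 ≤ c) : tri c ≤ Te (c - 1) + 2 := by
  obtain ⟨d, rfl⟩ := Nat.exists_eq_add_of_le' hc
  have h := two_tri (d + 1)
  have : 6 * tri (d + 1) ≤ d * (d + 1) * (d + 2) + 12 := by
    rcases d with _ | _ | _ | d
    · simp [tri]
    · simp [tri]
    · simp [tri]
    · nlinarith [Nat.zero_le (d * d * d), Nat.zero_le (d * d)]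
  simp only [Te, Nat.add_sub_cancel]
  omega

/-- The comparison firing vector on the nonnegative integers. -/
def cmpv (c k : ℕ) (m : ℕ) : ℕ := tri (c - m) + (k - tri c - (m - c))

lemma cmpv_zero (c k : ℕ) (h : tri c ≤ k) : cmpv c k 0 = k := by simp [cmpv]; omega

lemma cmpv_one (c k : ℕ) (hc : 1 ≤ c) (h : tri c ≤ k) : cmpv c k 1 + c = k := by
  obtain ⟨d, rfl⟩ := Nat.exists_eq_add_of_le' hc
  simp only [cmpv, Nat.add_sub_cancel]
  simp only [tri] at *
  omega

lemma cmpv_step (c k m : ℕ) : cmpv c k m = cmpv c k (m + 1) +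
    (if m < c then c - m else if m - c < k - tri c then 1 else 0) := by
  unfold cmpv
  split_ifs with h1 h2
  · obtain ⟨d, hd⟩ := Nat.exists_eq_add_of_lt h1
    subst hd
    rw [show m + d + 1 - m = d + 1 by omega, show m + d + 1 - (m + 1) = d by omega]
    simp only [tri]
    omega
  · rw [show c - m = 0 by omega, show c - (m + 1) = 0 by omega]; omega
  · rw [show c - m = 0 by omega, show c - (m + 1) = 0 by omega]; omega

lemma cmpv_stable (a b c k m : ℕ) (ha : 0 < a) (hab : a < b) (hc1 : 1 ≤ c)
    (hc : ((c : ℤ) - 1) * (b - a) < a) :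
    (b : ℤ) * ((cmpv c k m : ℤ) - cmpv c k (m + 1))
      - a * ((cmpv c k (m + 1) : ℤ) - cmpv c k (m + 1 + 1)) < a + b := by
  have h1 := cmpv_step c k m
  have h2 := cmpv_step c k (m + 1)
  generalize hp : (if m < c then c - m else if m - c < k - tri c then 1 else 0) = p at h1
  generalize hq : (if m + 1 < c then c - (m + 1) else
    if m + 1 - c < k - tri c then 1 else 0) = q at h2
  have hpq : p ≤ q + 1 := by split_ifs at hp hq <;> omega
  have hpc : p ≤ c := by split_ifs at hp <;> omega
  have e1 : (cmpv c k m : ℤ) - cmpv c k (m + 1) = p := by omega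
  have e2 : (cmpv c k (m + 1) : ℤ) - cmpv c k (m + 1 + 1) = q := by omega
  rw [e1, e2]
  have h3 : (a : ℤ) * (p - 1) ≤ a * q :=
    mul_le_mul_of_nonneg_left (by omega) (by positivity)
  have h4 : ((b : ℤ) - a) * p ≤ (b - a) * c :=
    mul_le_mul_of_nonneg_left (by omega) (by omega)
  nlinarith

lemma Leads.odo {a b n : ℕ} {s : ℤ →₀ ℕ} {L : List ℤ} (h : Leads a b (initState n) L s) :
    RightOdo a b (L.count 0 : ℕ) s (fun m => L.count m) := by
  refine ⟨rfl, ?_, ?_⟩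
  · obtain ⟨N, hN⟩ := (L.toFinset.finite_toSet).bddAbove
    refine ⟨N + 1, fun m hm => ?_⟩
    simp only [Nat.cast_eq_zero, List.count_eq_zero]
    intro hmem
    have := hN (show m ∈ (L.toFinset : Set ℤ) by simpa using hmem)
    omega
  · intro m hm
    rw [h.state m]
    simp only [lapState, initState]
    rw [Finsupp.single_eq_of_ne (by omega)]
    push_cast; ring

lemma Leads.mono {a b n : ℕ} {s t : ℤ →₀ ℕ} {L L' : List ℤ}
    (h : Leads a b (initState n) L s) (h' : Leads a b (initState (n + 1)) L' t)
    (ht : ∀ i, t i < a + b) : L.count 0 ≤ L'.count 0 := by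
  have := h.least (fun i => L'.count i) (fun i => by positivity) (fun i => by
    have h1 := h'.state i
    have h2 : (t i : ℤ) < a + b := by exact_mod_cast ht i
    have h3 : (initState n i : ℤ) ≤ initState (n + 1) i := by
      unfold initState
      by_cases e : i = 0
      · subst e; simp
      · rw [Finsupp.single_eq_of_ne e, Finsupp.single_eq_of_ne e]
    unfold lapState at h1 ⊢
    linarith) 0
  exact_mod_cast this

lemma Leads.diff_eq {a b n : ℕ} {s : ℤ →₀ ℕ} {L : List ℤ} (ha : 0 < a) (hab : a < b)
    (h : Leads a b (initState n) L s) (hs : ∀ i, s i < a + b) (c : ℕ) (hc0 : 1 ≤ c)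
    (hc1 : (a : ℤ) ≤ c * (b - a)) (hc2 : ((c : ℤ) - 1) * (b - a) < a)
    (hk : tri c ≤ L.count 0) : (L.count 0 : ℤ) - L.count 1 = c := by
  have hup := h.odo.upper hs c hc1
  have c1 := cmpv_one c (L.count 0) hc0 hk
  have c0 := cmpv_zero c (L.count 0) hk
  have := h.least (fun i => if i ≤ 0 then (L.count i : ℤ) else cmpv c (L.count 0) i.toNat)
    (fun i => by split_ifs <;> positivity) (fun i => by
      have h1 := h.state i
      have h2 : (s i : ℤ) < a + b := by exact_mod_cast hs i
      unfold lapState at h1 ⊢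
      simp only [] at h1 ⊢
      rcases lt_trichotomy i 0 with hi | hi | hi
      · rw [if_pos (by omega), if_pos (by omega), if_pos (by omega)]
        linarith
      · subst hi
        simp only [zero_add, zero_sub] at h1 ⊢
        rw [if_pos (by omega), if_pos (by omega), if_neg (by omega)]
        have : (a : ℤ) * (cmpv c (L.count 0) (Int.toNat 1)) ≤ a * L.count 1 := by
          apply mul_le_mul_of_nonneg_left _ (by positivity)
          simp only [Int.toNat_one]
          omega
        linarith
      · obtain ⟨m, rfl⟩ : ∃ m : ℕ, i = m + 1 := ⟨(i - 1).toNat, by omega⟩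
        have key := cmpv_stable a b c (L.count 0) m ha hab hc0 hc2
        have e : (if ((m : ℤ) + 1 - 1) ≤ 0 then (L.count ((m : ℤ) + 1 - 1) : ℤ)
            else cmpv c (L.count 0) ((m : ℤ) + 1 - 1).toNat) = cmpv c (L.count 0) m := by
          rcases m with _ | m
          · simp [c0]
          · rw [if_neg (by omega)]; congr 2; omega
        rw [e, if_neg (by omega), if_neg (by omega), show ((m : ℤ) + 1).toNat = m + 1 by omega,
          show ((m : ℤ) + 1 + 1).toNat = m + 1 + 1 by omega]
        simp only [initState]
        rw [Finsupp.single_eq_of_ne (by omega)]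
        push_cast
        linarith) 1
  simp at this
  omega

/-- If `B` is the balanced number of chips, then for all `n ≥ B`
the firing counts satisfy `f₀' - f₁' = f₀ - f₁ = c = ⌈a/(b-a)⌉`. -/
theorem stmt16 (a b : ℕ) (ha : 0 < a) (hab : a < b) (hcop : Nat.Coprime a b)
    (c : ℕ) (hc : (c : ℤ) = ⌈(a : ℚ) / ((b : ℚ) - (a : ℚ))⌉)
    (ξ : ℕ → ℤ →₀ ℕ) (hξ : SettlementSeq a b ξ)
    (φ : ℕ → ℤ →₀ ℕ) (hφ : ∀ n : ℕ, IsFinalState a b n (φ n))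
    (B : ℕ)
    (hB : (∃ k : ℕ, Te (c - 1) + 1 < k ∧ ∀ m : ℤ, 1 ≤ m → φ B m = ξ k m) ∧
      ∀ n : ℕ, n < B →
        ¬ ∃ k : ℕ, Te (c - 1) + 1 < k ∧ ∀ m : ℤ, 1 ≤ m → φ n m = ξ k m) :
    ∀ n : ℕ, B ≤ n → ∀ L L' : List ℤ,
      Leads a b (initState n) L (φ n) → Leads a b (initState (n + 1)) L' (φ (n + 1)) →
      (L.count 0 : ℤ) - (L.count 1 : ℤ) = c ∧
      (L'.count 0 : ℤ) - (L'.count 1 : ℤ) = c := by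
  obtain ⟨⟨k, hk, hkB⟩, -⟩ := hB
  have hba : (0 : ℚ) < (b : ℚ) - a := by
    have : (a : ℚ) < b := by exact_mod_cast hab
    linarith
  obtain ⟨q1, q2⟩ := (Int.ceil_eq_iff).1 hc.symm
  have hc1 : (a : ℤ) ≤ c * (b - a) := by
    rw [div_le_iff₀ hba] at q2
    exact_mod_cast q2
  have hc2 : ((c : ℤ) - 1) * (b - a) < a := by
    rw [lt_div_iff₀ hba] at q1
    exact_mod_cast q1
  have hc0 : 1 ≤ c := by
    rcases Nat.eq_zero_or_pos c with h | h
    · subst h; simp at hc1; omega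
    · exact h
  have hT := tri_le_Te c hc0
  have big : ∀ n, B ≤ n → ∀ L : List ℤ, Leads a b (initState n) L (φ n) →
      tri c ≤ L.count 0 := by
    intro n hn
    induction n, hn using Nat.le_induction with
    | base =>
      intro L hL
      obtain ⟨u, hu⟩ := hξ.odo k
      have := hL.odo.unique (by omega) hu hkB
      have : L.count 0 = k := by exact_mod_cast this
      omega
    | succ n hn ih =>
      intro L hL
      obtain ⟨L0, hL0⟩ := (hφ n).1.leads
      exact (ih L0 hL0).trans (hL0.mono hL (hφ (n + 1)).2)
  intro n hn L L' hL hL'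
  exact ⟨hL.diff_eq ha hab (hφ n).2 c hc0 hc1 hc2 (big n hn L hL),
    hL'.diff_eq ha hab (hφ (n + 1)).2 c hc0 hc1 hc2 (big (n + 1) (by omega) L' hL')⟩
end

section
/- If a < b are coprime and n ≥ B (the balanced number), then the right part of the final state evaluated in base b/a satisfies S_{φ(n)^R}(b/a) = Σ_{m≥1} s_m (a/b)^m · (b/a)^0 = a·c, and the left part satisfies S_{φ(n)^L}(b/a) = Σ_{m≤0} s_m (b/a)^{−m} = n − a·c, where c = ⌈a/(b−a)⌉. -/
namespace CF

def tn (n : ℕ) : ℤ := ∑ j ∈ Finset.range n, ((j : ℤ) + 1)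

def G (c : ℕ) (m : ℤ) : ℤ := tn ((c : ℤ) - m).toNat

lemma tn_succ (n : ℕ) : tn (n + 1) = tn n + (n + 1) := by
  simp [tn, Finset.sum_range_succ]

lemma tn_nonneg (n : ℕ) : 0 ≤ tn n := by
  unfold tn; positivity

lemma G_le (c : ℕ) (m : ℤ) (h : m ≤ c) : G c (m - 1) - G c m = c + 1 - m := by
  unfold G
  have : ((c : ℤ) - (m - 1)).toNat = ((c : ℤ) - m).toNat + 1 := by omega
  rw [this, tn_succ]
  have : ((((c : ℤ) - m).toNat : ℕ) : ℤ) = c - m := by omega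
  rw [this]; ring

lemma G_gt (c : ℕ) (m : ℤ) (h : (c : ℤ) < m) : G c (m - 1) - G c m = 0 := by
  unfold G
  have h1 : ((c : ℤ) - (m - 1)).toNat = 0 := by omega
  have h2 : ((c : ℤ) - m).toNat = 0 := by omega
  rw [h1, h2]; ring

lemma G_zero (c : ℕ) : G c 0 = tn c := by simp [G]

lemma G_nonneg (c : ℕ) (m : ℤ) : 0 ≤ G c m := tn_nonneg _

lemma tn_closed (n : ℕ) : 2 * tn n = n * (n + 1) := by
  induction n with
  | zero => simp [tn]
  | succ k ih => rw [tn_succ]; push_cast; linarith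

lemma tn_Te (c k : ℕ) (h : Te (c - 1) + 1 < k) : tn c ≤ k := by
  have h2 := tn_closed c
  rcases c with _ | c
  · simp [tn]
  · simp only [Nat.add_sub_cancel] at h
    unfold Te at h
    rcases Nat.lt_or_ge c 4 with hc | hc
    · interval_cases c <;> simp only [tn, Finset.sum_range_succ, Finset.sum_range_zero] <;> norm_num at h ⊢ <;> omega
    · have h3 : c * (c + 1) * (c + 2) < 6 * k := by omega
      have h4 : 6 * ((c + 1) * (c + 2)) ≤ 2 * (c * (c + 1) * (c + 2)) := by
        have := Nat.mul_le_mul_right ((c + 1) * (c + 2)) (show 6 ≤ 2 * c by omega)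
        calc _ ≤ _ := this
          _ = _ := by ring
      have h5 : ((6 * ((c + 1) * (c + 2)) : ℕ) : ℤ) ≤ ((2 * (c * (c + 1) * (c + 2)) : ℕ) : ℤ) := by
        exact_mod_cast h4
      have h6 : ((c * (c + 1) * (c + 2) : ℕ) : ℤ) < ((6 * k : ℕ) : ℤ) := by exact_mod_cast h3
      push_cast at h2 h5 h6
      nlinarith

/-- Half-line invariant. -/
def HInv (a b c : ℕ) (σ : ℤ →₀ ℕ) (u : ℤ → ℤ) : Prop :=
  (∀ m : ℤ, 1 ≤ m → (σ m : ℤ) = b * u (m - 1) + a * u (m + 1) - (a + b) * u m) ∧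
  (∃ N : ℤ, ∀ m, N ≤ m → u m = 0) ∧
  ∀ K : ℤ, u 0 ≤ K → tn c ≤ K → ∀ m : ℤ, 0 ≤ m → u m ≤ K - tn c + G c m

/-- Half-line stability of the staircase. -/
lemma stair (a b c : ℕ) (ha : 0 < a) (hab : a < b)
    (hc2 : ((b : ℤ) - a) * c < b) (K m : ℤ) (hm : 1 ≤ m) :
    (b : ℤ) * (K + G c (m - 1)) + a * (K + G c (m + 1)) - (a + b) * (K + G c m) < a + b := by
  have e : (b : ℤ) * (K + G c (m - 1)) + a * (K + G c (m + 1)) - (a + b) * (K + G c m)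
      = b * (G c (m - 1) - G c m) - a * (G c (m + 1 - 1) - G c (m + 1)) := by
    rw [add_sub_cancel_right]; ring
  rw [e]
  have hab' : (a : ℤ) < b := by exact_mod_cast hab
  have ha' : (0 : ℤ) < a := by exact_mod_cast ha
  rcases lt_trichotomy m c with h | h | h
  · rw [G_le c m h.le, G_le c (m + 1) (by omega)]
    nlinarith
  · rw [G_le c m h.le, G_gt c (m + 1) (by omega)]
    subst h
    linarith
  · rw [G_gt c m h, G_gt c (m + 1) (by omega)]
    linarith

lemma hstep (a b c : ℕ) (ha : 0 < a) (hab : a < b)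
    (hc2 : ((b : ℤ) - a) * c < b) (σ σ' : ℤ →₀ ℕ) (u : ℤ → ℤ) (h : HInv a b c σ u)
    (i : ℤ) (hi : 1 ≤ i) (hf : a + b ≤ σ i)
    (e1 : σ' i = σ i - (a + b)) (e2 : σ' (i + 1) = σ (i + 1) + b)
    (e3 : 1 ≤ i - 1 → σ' (i - 1) = σ (i - 1) + a)
    (e4 : ∀ m : ℤ, 1 ≤ m → m ≠ i - 1 → m ≠ i → m ≠ i + 1 → σ' m = σ m) :
    HInv a b c σ' (fun m => u m + if m = i then 1 else 0) := by
  obtain ⟨h1, ⟨N, hN⟩, h3⟩ := h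
  refine ⟨?_, ⟨max N (i + 1), ?_⟩, ?_⟩
  · intro m hm
    have hm1 := h1 m hm
    by_cases c1 : m = i
    · subst c1
      have : ((σ' m : ℕ) : ℤ) = σ m - (a + b) := by omega
      rw [this, hm1]
      simp
      ring
    by_cases c2 : m = i + 1
    · subst c2
      have : ((σ' (i + 1) : ℕ) : ℤ) = σ (i + 1) + b := by omega
      rw [this, hm1]
      simp [show ¬ (i + 1 + 1 = i) by omega]
      ring
    by_cases c3 : m = i - 1
    · subst c3
      have : ((σ' (i - 1) : ℕ) : ℤ) = σ (i - 1) + a := by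
        have := e3 hm
        omega
      rw [this, hm1]
      simp [show ¬ (i - 1 - 1 = i) by omega]
      ring
    · rw [e4 m hm c3 c1 c2, hm1]
      simp [c1, show ¬ (m - 1 = i) by omega, show ¬ (m + 1 = i) by omega]
  · intro m hm
    have : N ≤ m := le_trans (le_max_left _ _) hm
    have h2 : i + 1 ≤ m := le_trans (le_max_right _ _) hm
    simp [hN m this, show ¬ (m = i) by omega]
  · intro K hK hT m hm
    have hu0 : u 0 ≤ K := by simpa [show ¬ (0 = i) by omega] using hK
    have hb := h3 K hu0 hT
    by_cases c1 : m = i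
    · subst c1
      simp only [if_true]
      by_contra hcon
      have heq : u m = K - tn c + G c m := by
        have := hb m hm
        omega
      have hs := stair a b c ha hab hc2 (K - tn c) m hi
      have h5 := hb (m - 1) (by omega)
      have h6 := hb (m + 1) (by omega)
      have h7 := h1 m hi
      have h8 : (a : ℤ) + b ≤ σ m := by exact_mod_cast hf
      have h9 := mul_le_mul_of_nonneg_left h5 (Int.natCast_nonneg b)
      have h10 := mul_le_mul_of_nonneg_left h6 (Int.natCast_nonneg a)
      rw [heq] at h7
      linarith
    · simpa [c1] using hb m hm

lemma hadd (a b c : ℕ) (σ σ' : ℤ →₀ ℕ) (u : ℤ → ℤ) (h : HInv a b c σ u)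
    (e1 : σ' 1 = σ 1 + b) (e2 : ∀ m : ℤ, 2 ≤ m → σ' m = σ m) :
    HInv a b c σ' (fun m => u m + if m = 0 then 1 else 0) := by
  obtain ⟨h1, ⟨N, hN⟩, h3⟩ := h
  refine ⟨?_, ⟨max N 1, ?_⟩, ?_⟩
  · intro m hm
    have hm1 := h1 m hm
    by_cases c1 : m = 1
    · subst c1
      rw [e1]; push_cast; rw [hm1]
      simp
      ring
    · rw [e2 m (by omega), hm1]
      simp [show ¬ (m = 0) by omega, show ¬ (m - 1 = 0) by omega, show ¬ (m + 1 = 0) by omega]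
  · intro m hm
    have : N ≤ m := le_trans (le_max_left _ _) hm
    have h2 : 1 ≤ m := le_trans (le_max_right _ _) hm
    simp [hN m this, show ¬ (m = 0) by omega]
  · intro K hK hT m hm
    simp only [if_true] at hK
    have hb := h3 K (by omega) hT
    by_cases c1 : m = 0
    · subst c1
      simp only [if_true, G_zero]
      omega
    · simpa [c1] using hb m hm

lemma hneg (a b c : ℕ) (σ σ' : ℤ →₀ ℕ) (u : ℤ → ℤ) (h : HInv a b c σ u) (i : ℤ) (hi : i < 0)
    (e2 : ∀ m : ℤ, 1 ≤ m → σ' m = σ m) :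
    HInv a b c σ' (fun m => u m + if m = i then 1 else 0) := by
  obtain ⟨h1, ⟨N, hN⟩, h3⟩ := h
  refine ⟨?_, ⟨max N 1, ?_⟩, ?_⟩
  · intro m hm
    have hm1 := h1 m hm
    rw [e2 m hm, hm1]
    simp [show ¬ (m = i) by omega, show ¬ (m - 1 = i) by omega, show ¬ (m + 1 = i) by omega]
  · intro m hm
    have : N ≤ m := le_trans (le_max_left _ _) hm
    have h2 : 1 ≤ m := le_trans (le_max_right _ _) hm
    simp [hN m this, show ¬ (m = i) by omega]
  · intro K hK hT m hm
    have hb := h3 K (by simpa [show ¬ (0 = i) by omega] using hK) hT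
    simpa [show ¬ (m = i) by omega] using hb m hm

lemma hzero (a b c : ℕ) (σ : ℤ →₀ ℕ) (h : ∀ m : ℤ, 1 ≤ m → σ m = 0) :
    HInv a b c σ (fun _ => 0) := by
  refine ⟨fun m hm => by simp [h m hm], ⟨0, fun _ _ => rfl⟩, ?_⟩
  intro K _ hT m _
  have := G_nonneg c m
  simp only
  omega

/-- bounds on `d`. -/
lemma dbound (a b c : ℕ) (ha : 0 < a) (hab : a < b)
    (hc1 : (a : ℤ) ≤ ((b : ℤ) - a) * c)
    (σ : ℤ →₀ ℕ) (u : ℤ → ℤ) (h : HInv a b c σ u) (hs : ∀ i, σ i < a + b) :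
    ∀ m : ℤ, 1 ≤ m → 0 ≤ u (m - 1) - u m ∧ u (m - 1) - u m ≤ c := by
  obtain ⟨h1, ⟨N, hN⟩, h3⟩ := h
  have hab' : (a : ℤ) < b := by exact_mod_cast hab
  have ha' : (0 : ℤ) < a := by exact_mod_cast ha
  have key : ∀ j : ℕ, ∀ m : ℤ, N + 1 - j ≤ m → 1 ≤ m →
      0 ≤ u (m - 1) - u m ∧ u (m - 1) - u m ≤ c := by
    intro j
    induction j with
    | zero =>
      intro m hm _
      simp only [Nat.cast_zero, sub_zero] at hm
      rw [hN m (by omega), hN (m - 1) (by omega)]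
      simp
    | succ j ih =>
      intro m hm hm1
      have h4 := ih (m + 1) (by push_cast at hm; omega) (by omega)
      rw [add_sub_cancel_right] at h4
      obtain ⟨h5, h6⟩ := h4
      have h7 := h1 m hm1
      have h8 : (σ m : ℤ) < a + b := by exact_mod_cast hs m
      have h9 : (0 : ℤ) ≤ σ m := by positivity
      have h10 := mul_nonneg ha'.le h5
      have h11 := mul_le_mul_of_nonneg_left h6 ha'.le
      constructor
      · by_contra hcon
        have : u (m - 1) - u m ≤ -1 := by omega
        nlinarith
      · by_contra hcon
        have : (c : ℤ) + 1 ≤ u (m - 1) - u m := by omega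
        have h12 := mul_le_mul_of_nonneg_left this (ha'.trans hab').le
        nlinarith
  intro m hm
  exact key (N + 1 - m).toNat m (by omega) hm

lemma u0_ge (a b c : ℕ) (ha : 0 < a) (hab : a < b)
    (hc1 : (a : ℤ) ≤ ((b : ℤ) - a) * c)
    (σ : ℤ →₀ ℕ) (u : ℤ → ℤ) (h : HInv a b c σ u) (hs : ∀ i, σ i < a + b)
    (hd : u 0 - u 1 = c) : tn c ≤ u 0 := by
  have hb := dbound a b c ha hab hc1 σ u h hs
  obtain ⟨h1, ⟨N, hN⟩, h3⟩ := h
  have hab' : (a : ℤ) < b := by exact_mod_cast hab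
  have ha' : (0 : ℤ) < a := by exact_mod_cast ha
  have drop : ∀ j : ℕ, (c : ℤ) - j ≤ u j - u (j + 1) := by
    intro j
    induction j with
    | zero => simp [hd]
    | succ j ih =>
      have h4 := (hb (j + 1 + 1) (by omega)).1
      have h7 := h1 (j + 1) (by omega)
      have h8 : (σ ((j : ℤ) + 1) : ℤ) < a + b := by exact_mod_cast hs _
      rw [add_sub_cancel_right] at h4 h7
      push_cast
      by_contra hcon
      have : u (j + 1) - u (j + 1 + 1) + 2 ≤ u j - u (j + 1) := by omega
      have h12 := mul_le_mul_of_nonneg_left this (ha'.trans hab').le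
      nlinarith
  have nn : ∀ m : ℕ, 0 ≤ u m := by
    have mono : ∀ (m k : ℕ), u ((m + k : ℕ) : ℤ) ≤ u m := by
      intro m k
      induction k with
      | zero => simp
      | succ k ih =>
        have := (hb ((m + k : ℕ) + 1 : ℤ) (by omega)).1
        rw [add_sub_cancel_right] at this
        push_cast at this ih ⊢
        rw [← add_assoc]
        omega
    intro m
    have := mono m N.toNat
    rw [hN _ (by push_cast; omega)] at this
    exact this
  have sumb : ∀ j : ℕ, j ≤ c → tn c - tn (c - j) + u j ≤ u 0 := by
    intro j
    induction j with
    | zero => simp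
    | succ j ih =>
      intro hj
      have h4 := ih (by omega)
      have h5 := drop j
      have h6 : c - j = (c - (j + 1)) + 1 := by omega
      rw [h6, tn_succ] at h4
      have h7 : ((c - (j + 1) : ℕ) : ℤ) = c - (j + 1) := by omega
      rw [h7] at h4
      push_cast
      omega
  have h5 := sumb c le_rfl
  have := nn c
  simp [tn] at h5 ⊢
  omega

lemma SR_eq (a b c : ℕ) (ha : 0 < a) (hab : a < b)
    (σ : ℤ →₀ ℕ) (u : ℤ → ℤ) (h : HInv a b c σ u) :
    statePolyR σ ((b : ℚ) / a) = (a : ℚ) * ((u 0 - u 1 : ℤ) : ℚ) := by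
  obtain ⟨h1, ⟨N, hN⟩, -⟩ := h
  have ha' : (a : ℚ) ≠ 0 := by positivity
  have hb' : (b : ℚ) ≠ 0 := by
    have : 0 < b := by omega
    positivity
  have tele : ∀ M : ℕ, ∑ j ∈ Finset.range M, (σ ((j : ℤ) + 1) : ℚ) * ((b : ℚ) / a) ^ (-((j : ℤ) + 1))
      = a * ((u 0 - u 1 : ℤ) : ℚ)
        - a * ((u M - u (M + 1) : ℤ) : ℚ) * ((b : ℚ) / a) ^ (-(M : ℤ)) := by
    intro M
    induction M with
    | zero => simp
    | succ M ih =>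
      rw [Finset.sum_range_succ, ih]
      have h7 := h1 (M + 1) (by omega)
      rw [add_sub_cancel_right] at h7
      have h8 : (σ ((M : ℤ) + 1) : ℚ) = b * u M + a * u (M + 1 + 1) - (a + b) * u (M + 1) := by
        exact_mod_cast h7
      rw [h8]
      have h9 : ((b : ℚ) / a) ^ (-(M : ℤ)) = ((b : ℚ) / a) ^ (-((M : ℤ) + 1)) * (b / a) := by
        rw [← zpow_add_one₀ (by positivity)]
        congr 1; ring
      rw [h9]
      push_cast
      field_simp
      ring
  set P := N.toNat + σ.support.sup Int.toNat with hP
  have hsum : statePolyR σ ((b : ℚ) / a)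
      = ∑ j ∈ Finset.range P, (σ ((j : ℤ) + 1) : ℚ) * ((b : ℚ) / a) ^ (-((j : ℤ) + 1)) := by
    unfold statePolyR
    have hinj : Function.Injective (fun j : ℕ => (j : ℤ) + 1) := by
      intro x y hxy
      simp only at hxy
      omega
    refine Eq.trans ?_ (Finset.sum_map (Finset.range P) ⟨fun j : ℕ => (j : ℤ) + 1, hinj⟩
      (fun m : ℤ => (σ m : ℚ) * ((b : ℚ) / a) ^ (-m)))
    apply Finset.sum_subset
    · intro m hm
      rw [Finset.mem_filter] at hm
      have : m.toNat ≤ σ.support.sup Int.toNat := Finset.le_sup (f := Int.toNat) hm.1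
      simp only [Finset.mem_map, Finset.mem_range, Function.Embedding.coeFn_mk]
      exact ⟨m.toNat - 1, by omega, by omega⟩
    · intro m hm hm2
      simp only [Finset.mem_map, Finset.mem_range, Function.Embedding.coeFn_mk] at hm
      obtain ⟨j, _, rfl⟩ := hm
      have : σ ((j : ℤ) + 1) = 0 := by
        by_contra hcon
        apply hm2
        rw [Finset.mem_filter, Finsupp.mem_support_iff]
        exact ⟨hcon, by omega⟩
      simp [this]
  rw [hsum, tele, hN P (by omega), hN (P + 1) (by omega)]
  simp

lemma d1_eq (a b c : ℕ) (ha : 0 < a) (hab : a < b)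
    (hc1 : (a : ℤ) ≤ ((b : ℤ) - a) * c)
    (σ : ℤ →₀ ℕ) (u : ℤ → ℤ) (h : HInv a b c σ u) (hs : ∀ i, σ i < a + b)
    (hT : tn c ≤ u 0) : u 0 - u 1 = c := by
  have h1 := (dbound a b c ha hab hc1 σ u h hs 1 le_rfl).2
  simp only [sub_self] at h1
  rcases Nat.eq_zero_or_pos c with h0 | h0
  · subst h0
    have := (dbound a b 0 ha hab hc1 σ u h hs 1 le_rfl).1
    simp only [sub_self] at this
    simp at h1 ⊢
    omega
  · have h2 := h.2.2 (u 0) le_rfl hT 1 (by omega)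
    have h3 := G_le c 1 (by omega)
    rw [sub_self, G_zero] at h3
    omega

lemma xi_inv (a b c : ℕ) (ha : 0 < a) (hab : a < b)
    (hc2 : ((b : ℤ) - a) * c < b)
    (ξ : ℕ → ℤ →₀ ℕ) (hξ : SettlementSeq a b ξ) (k : ℕ) :
    ∃ u, HInv a b c (ξ k) u ∧ u 0 = k := by
  induction k with
  | zero => exact ⟨_, hzero a b c _ (by simp [hξ.1]), by simp⟩
  | succ k ih =>
    obtain ⟨u, hu, hk⟩ := ih
    have hr := (hξ.2 k).1
    have h0 : ∃ u, HInv a b c (ξ k + Finsupp.single 1 b) u ∧ u 0 = (k + 1 : ℕ) := by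
      refine ⟨_, hadd a b c _ _ u hu ?_ ?_, by simp [hk]⟩
      · simp
      · intro m hm
        simp [Finsupp.single_apply, show ¬ (1 = m) by omega]
    generalize ξ (k + 1) = τ at hr
    induction hr with
    | refl => exact h0
    | tail _ hst ih2 =>
      obtain ⟨v, hv, hv0⟩ := ih2
      obtain ⟨i, hi, hf, -, e1, e2, e3, e4⟩ := hst
      exact ⟨_, hstep a b c ha hab hc2 _ _ v hv i hi hf e1 e2 e3 e4,
        by simp [hv0, show ¬ (0 = i) by omega]⟩

/-- Full-line invariant. -/
def FInv (a b n : ℕ) (σ : ℤ →₀ ℕ) (u : ℤ → ℤ) : Prop :=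
  (∀ m : ℤ, (σ m : ℤ) = (if m = 0 then (n : ℤ) else 0)
    + b * u (m - 1) + a * u (m + 1) - (a + b) * u m) ∧
  (∀ m, 0 ≤ u m) ∧
  ∀ V : ℤ → ℤ, (∀ m, 0 ≤ V m) →
    (∀ m : ℤ, (if m = 0 then (n : ℤ) else 0)
      + b * V (m - 1) + a * V (m + 1) - (a + b) * V m < a + b) → ∀ m, u m ≤ V m

lemma fstep (a b n : ℕ) (σ σ' : ℤ →₀ ℕ) (u : ℤ → ℤ) (h : FInv a b n σ u)
    (i : ℤ) (hf : fireAt a b i σ σ') :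
    FInv a b n σ' (fun m => u m + if m = i then 1 else 0) := by
  obtain ⟨h1, h2, h3⟩ := h
  obtain ⟨hf, e3, e1, e2, e4⟩ := hf
  refine ⟨?_, ?_, ?_⟩
  · intro m
    have hm1 := h1 m
    by_cases c1 : m = i
    · subst c1
      have : ((σ' m : ℕ) : ℤ) = σ m - (a + b) := by omega
      rw [this, hm1]
      simp
      ring
    by_cases c2 : m = i + 1
    · subst c2
      have : ((σ' (i + 1) : ℕ) : ℤ) = σ (i + 1) + b := by omega
      rw [this, hm1]
      simp [show ¬ (i + 1 + 1 = i) by omega]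
      ring
    by_cases c3 : m = i - 1
    · subst c3
      have : ((σ' (i - 1) : ℕ) : ℤ) = σ (i - 1) + a := by omega
      rw [this, hm1]
      simp [show ¬ (i - 1 - 1 = i) by omega]
      ring
    · rw [e4 m c3 c1 c2, hm1]
      simp [c1, show ¬ (m - 1 = i) by omega, show ¬ (m + 1 = i) by omega]
  · intro m
    have := h2 m
    simp only
    split_ifs <;> omega
  · intro V hV hs m
    have hb := h3 V hV hs
    by_cases c1 : m = i
    · subst c1
      simp only [if_true]
      by_contra hcon
      have heq : u m = V m := by
        have := hb m
        omega
      have h7 := h1 m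
      have h8 : (a : ℤ) + b ≤ σ m := by exact_mod_cast hf
      have h9 := mul_le_mul_of_nonneg_left (hb (m - 1)) (Int.natCast_nonneg b)
      have h10 := mul_le_mul_of_nonneg_left (hb (m + 1)) (Int.natCast_nonneg a)
      rw [heq] at h7
      have := hs m
      linarith
    · simpa [c1] using hb m

lemma statePoly_add (σ τ : ℤ →₀ ℕ) (t : ℚ) :
    statePoly (σ + τ) t = statePoly σ t + statePoly τ t :=
  Finsupp.sum_add_index' (h := fun m (s : ℕ) => (s : ℚ) * t ^ (-m)) (by simp)
    (by intro m x y; push_cast; ring)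

lemma statePoly_single (i : ℤ) (x : ℕ) (t : ℚ) :
    statePoly (Finsupp.single i x) t = x * t ^ (-i) :=
  Finsupp.sum_single_index (h := fun m (s : ℕ) => (s : ℚ) * t ^ (-m)) (by simp)

lemma statePoly_fire (a b : ℕ) (ha : 0 < a) (hb : 0 < b) (i : ℤ) (σ σ' : ℤ →₀ ℕ)
    (hf : fireAt a b i σ σ') :
    statePoly σ' ((b : ℚ) / a) = statePoly σ ((b : ℚ) / a) := by
  obtain ⟨hf, e3, e1, e2, e4⟩ := hf
  have key : σ' + Finsupp.single i (a + b)
      = σ + Finsupp.single (i - 1) a + Finsupp.single (i + 1) b := by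
    ext m
    simp only [Finsupp.add_apply, Finsupp.single_apply]
    by_cases c1 : m = i
    · subst c1
      simp
      omega
    by_cases c2 : m = i + 1
    · subst c2
      simp [e2, show ¬ (i - 1 = i + 1) by omega]
    by_cases c3 : m = i - 1
    · subst c3
      simp [e3, show ¬ (i = i - 1) by omega, show ¬ (i + 1 = i - 1) by omega]
    · rw [e4 m c3 c1 c2]
      simp [Ne.symm c1, Ne.symm c2, Ne.symm c3]
  have h := congrArg (fun s => statePoly s ((b : ℚ) / a)) key
  simp only [statePoly_add, statePoly_single] at h
  have ht : ((b : ℚ) / a) ≠ 0 := by positivity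
  have z1 : ((b : ℚ) / a) ^ (-(i - 1)) = (b / a) ^ (-i) * (b / a) := by
    rw [← zpow_add_one₀ ht]; congr 1; ring
  have z2 : ((b : ℚ) / a) ^ (-(i + 1)) = ((b : ℚ) / a) ^ (-i) * ((b : ℚ) / a)⁻¹ := by
    rw [← zpow_sub_one₀ ht]; congr 1; ring
  rw [z1, z2] at h
  have e : (a : ℚ) * ((b / a) ^ (-i) * (b / a)) + b * ((b / a) ^ (-i) * (b / a : ℚ)⁻¹)
      = ((a + b : ℕ) : ℚ) * (b / a) ^ (-i) := by
    have : (a : ℚ) ≠ 0 := by positivity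
    have : (b : ℚ) ≠ 0 := by positivity
    generalize ((b : ℚ) / a) ^ (-i) = z
    push_cast
    field_simp
    ring
  linarith

lemma reach_inv (a b c n : ℕ) (ha : 0 < a) (hab : a < b)
    (hc2 : ((b : ℤ) - a) * c < b) (σ : ℤ →₀ ℕ) (hr : Reaches a b (initState n) σ) :
    statePoly σ ((b : ℚ) / a) = n ∧ ∃ u, HInv a b c σ u ∧ FInv a b n σ u := by
  unfold Reaches at hr
  induction hr with
  | refl =>
    refine ⟨by simp [initState, statePoly_single], fun _ => 0, ?_, ?_, ?_, ?_⟩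
    · apply hzero
      intro m hm
      simp [initState, Finsupp.single_apply, show ¬ (0 = m) by omega]
    · intro m
      simp [initState, Finsupp.single_apply, eq_comm]
    · simp
    · intro V hV _ m
      exact hV m
  | tail _ hst ih =>
    obtain ⟨hp, v, hv, hw⟩ := ih
    obtain ⟨i, hf⟩ := hst
    refine ⟨(statePoly_fire a b ha (by omega) i _ _ hf).trans hp, _, ?_, fstep a b n _ _ v hw i hf⟩
    obtain ⟨hf, e3, e1, e2, e4⟩ := hf
    rcases lt_trichotomy i 0 with h | h | h
    · exact hneg a b c _ _ v hv i h (fun m hm => e4 m (by omega) (by omega) (by omega))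
    · subst h
      exact hadd a b c _ _ v hv e2 (fun m hm => e4 m (by omega) (by omega) (by omega))
    · exact hstep a b c ha hab hc2 _ _ v hv i (by omega) hf e1 e2 (fun _ => e3)
        (fun m _ => e4 m)

lemma SR_congr (σ τ : ℤ →₀ ℕ) (t : ℚ) (h : ∀ m : ℤ, 1 ≤ m → σ m = τ m) :
    statePolyR σ t = statePolyR τ t := by
  unfold statePolyR
  have : σ.support.filter (fun m => 1 ≤ m) = τ.support.filter (fun m => 1 ≤ m) := by
    ext m
    simp only [Finset.mem_filter, Finsupp.mem_support_iff]
    constructor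
    · rintro ⟨h1, h2⟩
      exact ⟨by rwa [← h m h2], h2⟩
    · rintro ⟨h1, h2⟩
      exact ⟨by rwa [h m h2], h2⟩
  rw [this]
  apply Finset.sum_congr rfl
  intro m hm
  rw [h m (Finset.mem_filter.1 hm).2]

lemma SLR (σ : ℤ →₀ ℕ) (t : ℚ) : statePolyL σ t + statePolyR σ t = statePoly σ t := by
  unfold statePolyL statePolyR statePoly
  rw [← Finset.sum_filter_add_sum_filter_not σ.support (fun m => m ≤ 0)]
  congr 2
  ext m
  simp only [Finset.mem_filter]
  constructor
  · rintro ⟨h1, h2⟩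
    exact ⟨h1, by omega⟩
  · rintro ⟨h1, h2⟩
    exact ⟨h1, by omega⟩

end CF

open CF

/-- For `n ≥ B` (the balanced number), `S_{φ(n)^R}(b/a) = a·c`
and `S_{φ(n)^L}(b/a) = n - a·c`, where `c = ⌈a/(b-a)⌉`. -/
theorem stmt17 (a b : ℕ) (ha : 0 < a) (hab : a < b) (hcop : Nat.Coprime a b)
    (c : ℕ) (hc : (c : ℤ) = ⌈(a : ℚ) / ((b : ℚ) - (a : ℚ))⌉)
    (ξ : ℕ → ℤ →₀ ℕ) (hξ : SettlementSeq a b ξ)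
    (φ : ℕ → ℤ →₀ ℕ) (hφ : ∀ n : ℕ, IsFinalState a b n (φ n))
    (B : ℕ)
    (hB : (∃ k : ℕ, Te (c - 1) + 1 < k ∧ ∀ m : ℤ, 1 ≤ m → φ B m = ξ k m) ∧
      ∀ n : ℕ, n < B →
        ¬ ∃ k : ℕ, Te (c - 1) + 1 < k ∧ ∀ m : ℤ, 1 ≤ m → φ n m = ξ k m) :
    ∀ n : ℕ, B ≤ n →
      statePolyR (φ n) ((b : ℚ) / a) = (a : ℚ) * c ∧
      statePolyL (φ n) ((b : ℚ) / a) = (n : ℚ) - (a : ℚ) * c := by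
  have hba : (0 : ℚ) < (b : ℚ) - a := by
    have : (a : ℚ) < b := by exact_mod_cast hab
    linarith
  have hc' := (Int.ceil_eq_iff).1 hc.symm
  obtain ⟨hcl, hcr⟩ := hc'
  rw [lt_div_iff₀ hba] at hcl
  rw [div_le_iff₀ hba] at hcr
  have hc1 : (a : ℤ) ≤ ((b : ℤ) - a) * c := by
    have : (a : ℚ) ≤ ((b : ℚ) - a) * c := by
      push_cast at hcr
      linarith
    exact_mod_cast this
  have hc2 : ((b : ℤ) - a) * c < b := by
    have : ((b : ℚ) - a) * c < b := by
      push_cast at hcl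
      linarith
    exact_mod_cast this
  intro n hn
  obtain ⟨⟨k, hk, hkB⟩, -⟩ := hB
  -- settlement state
  obtain ⟨w, hw, hw0⟩ := xi_inv a b c ha hab hc2 ξ hξ k
  have hwk : ∀ i : ℤ, ξ k i < a + b := by
    rcases k with _ | k
    · omega
    · exact (hξ.2 k).2
  have hw1 := d1_eq a b c ha hab hc1 _ w hw hwk (by rw [hw0]; exact tn_Te c k hk)
  have hSw := SR_eq a b c ha hab _ w hw
  -- state at B
  obtain ⟨-, uB, hHB, hFB⟩ := reach_inv a b c B ha hab hc2 _ (hφ B).1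
  have hSB := SR_eq a b c ha hab _ uB hHB
  rw [SR_congr _ _ _ hkB, hSw, hw1] at hSB
  have haq : (a : ℚ) ≠ 0 := by positivity
  have hdB : uB 0 - uB 1 = c := by
    have := mul_left_cancel₀ haq hSB
    exact_mod_cast this.symm
  have hTB := u0_ge a b c ha hab hc1 _ uB hHB (hφ B).2 hdB
  -- state at n
  obtain ⟨hpoly, u, hH, hF⟩ := reach_inv a b c n ha hab hc2 _ (hφ n).1
  have hmono := hFB.2.2 u hF.2.1 (by
    intro m
    have h1 := hF.1 m
    have h2 : (φ n m : ℤ) < a + b := by exact_mod_cast (hφ n).2 m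
    have h3 : (if m = 0 then (B : ℤ) else 0) ≤ (if m = 0 then (n : ℤ) else 0) := by
      split_ifs
      · exact_mod_cast hn
      · exact le_rfl
    linarith) 0
  have hd := d1_eq a b c ha hab hc1 _ u hH (hφ n).2 (hTB.trans hmono)
  have hS := SR_eq a b c ha hab _ u hH
  rw [hd] at hS
  push_cast at hS
  refine ⟨hS, ?_⟩
  have := SLR (φ n) ((b : ℚ) / a)
  rw [hS, hpoly] at this
  linarith
end
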